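/- Let X be a nonempty finite set, let p : X → ℝ and ξ : X → ℝ be probability distributions with ξ(x) > 0 for all x, let m > 0 and let Z > 0 be a fixed real number. Let φ : ℝ → X → ℝ be such that for every x ∈ X the map θ ↦ φ_θ(x) is differentiable at θ₀ ∈ ℝ with derivative φ′_{θ₀}(x) and φ_{θ₀}(x) > 0, and set q_θ(x) = φ_θ(x)/Z. Then the NCE loss L(θ) = −∑_{x∈X} p(x)·log( q_θ(x)/(q_θ(x) + m·ξ(x)) ) − m·∑_{x∈X} ξ(x)·log( m·ξ(x)/(q_θ(x) + m·ξ(x)) ) is differentiable at θ₀ with derivative L′(θ₀) = −∑_{x∈X} ( p(x)/q_{θ₀}(x) − 1 ) · ( m·ξ(x)/(q_{θ₀}(x) + m·ξ(x)) ) · ( 1/Z ) · φ′_{θ₀}(x). -/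

import Mathlib

/-!
Put `ν = m ξ x` for the noise weight at `x`. The contribution of `x` to the loss is a function of
the single number `q = q_θ x`, and expanding the logarithms turns it into
`(p + ν) log (q + ν) - p log q - ν log ν`. Its derivative in `q`, `(p + ν) / (q + ν) - p / q`,
equals `-(p / q - 1) (ν / (q + ν))`; the chain rule in `θ` and summation over `x` do the rest.
-/

open Real

/-- The contribution of one point to the NCE loss, as a function of the model weight `q` there: the
binary cross-entropy between the data and noise weights `p`, `ν` and the posterior class
probabilities `q / (q + ν)`, `ν / (q + ν)`. The factor `m` of the loss is absorbed into `ν`.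
At `ν = 0` the noise term is `0 * log 0 = 0`, the usual convention. -/
noncomputable def nceTerm (p ν q : ℝ) : ℝ :=
  -(p * log (q / (q + ν))) - ν * log (ν / (q + ν))

/-- The NCE loss of the model `q` for data weights `p`, noise weights `ξ` and `m` noise samples per
data sample, where `m` is a real ratio. -/
noncomputable def nceLoss {X : Type*} [Fintype X] (p ξ : X → ℝ) (m : ℝ) (q : X → ℝ) : ℝ :=
  -∑ x, p x * log (q x / (q x + m * ξ x)) - m * ∑ x, ξ x * log (m * ξ x / (q x + m * ξ x))

theorem nceLoss_eq_sum_nceTerm {X : Type*} [Fintype X] (p ξ : X → ℝ) (m : ℝ) (q : X → ℝ) :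
    nceLoss p ξ m q = ∑ x, nceTerm (p x) (m * ξ x) (q x) := by
  simp only [nceLoss, nceTerm, Finset.sum_sub_distrib, Finset.sum_neg_distrib, Finset.mul_sum,
    mul_assoc]

section Pointwise

variable {ν q : ℝ}

theorem nceTerm_eq_mul_log_sub_mul_log (p : ℝ) (hν : 0 ≤ ν) (hq : 0 < q) :
    nceTerm p ν q = (p + ν) * log (q + ν) - p * log q - ν * log ν := by
  have hsum : q + ν ≠ 0 := by positivity
  have hdata : log (q / (q + ν)) = log q - log (q + ν) := log_div hq.ne' hsum
  have hnoise : ν * log (ν / (q + ν)) = ν * (log ν - log (q + ν)) := by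
    rcases eq_or_ne ν 0 with rfl | hν₀
    · simp
    · rw [log_div hν₀ hsum]
  rw [nceTerm, hdata, hnoise]
  ring

theorem hasDerivAt_nceTerm (p : ℝ) (hν : 0 ≤ ν) (hq : 0 < q) :
    HasDerivAt (nceTerm p ν) (-((p / q - 1) * (ν / (q + ν)))) q := by
  have hsum : q + ν ≠ 0 := by positivity
  have hlogs : HasDerivAt (fun t => (p + ν) * log (t + ν) - p * log t - ν * log ν)
      ((p + ν) * (1 / (q + ν)) - p * q⁻¹) q :=
    (((((hasDerivAt_id q).add_const ν).log hsum).const_mul (p + ν)).sub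
      ((hasDerivAt_log hq.ne').const_mul p)).sub_const _
  have hslope : (p + ν) * (1 / (q + ν)) - p * q⁻¹ = -((p / q - 1) * (ν / (q + ν))) := by
    field_simp
    ring
  rw [← hslope]
  refine hlogs.congr_of_eventuallyEq ?_
  filter_upwards [lt_mem_nhds hq] with t ht
  exact nceTerm_eq_mul_log_sub_mul_log p hν ht

end Pointwise

theorem stmt_13_general {X E : Type*} [Fintype X] [NormedAddCommGroup E] [NormedSpace ℝ E]
    (p : X → ℝ) {ξ : X → ℝ} (hξ : ∀ x, 0 ≤ ξ x) {m : ℝ} (hm : 0 ≤ m)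
    {q : E → X → ℝ} {q' : X → E →L[ℝ] ℝ} {θ₀ : E}
    (hderiv : ∀ x, HasFDerivAt (fun θ => q θ x) (q' x) θ₀) (hpos : ∀ x, 0 < q θ₀ x) :
    HasFDerivAt (fun θ => nceLoss p ξ m (q θ))
      (-∑ x, ((p x / q θ₀ x - 1) * (m * ξ x / (q θ₀ x + m * ξ x))) • q' x) θ₀ := by
  have hterm (x : X) : HasFDerivAt (fun θ => nceTerm (p x) (m * ξ x) (q θ x))
      (-(((p x / q θ₀ x - 1) * (m * ξ x / (q θ₀ x + m * ξ x))) • q' x)) θ₀ := by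
    have hchain :=
      (hasDerivAt_nceTerm (p x) (mul_nonneg hm (hξ x)) (hpos x)).comp_hasFDerivAt θ₀ (hderiv x)
    exact hchain.congr_fderiv (neg_smul _ _)
  simp only [nceLoss_eq_sum_nceTerm, ← Finset.sum_neg_distrib]
  exact HasFDerivAt.fun_sum fun x _ => hterm x

/-- Gradient of the NCE loss: for the model `q_θ x = φ_θ x / Z` with fixed `Z > 0`,
the NCE loss has derivative
`-∑ x, (p x / q_{θ₀} x - 1) · (m ξ x / (q_{θ₀} x + m ξ x)) · (1/Z) · φ'_{θ₀} x`. -/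
theorem stmt_13 {X : Type*} [Fintype X] [Nonempty X]
    (p ξ : X → ℝ) (hp0 : ∀ x, 0 ≤ p x) (hp1 : ∑ x, p x = 1)
    (hξ : ∀ x, 0 < ξ x) (hξ1 : ∑ x, ξ x = 1)
    (m Z : ℝ) (hm : 0 < m) (hZ : 0 < Z)
    (φ : ℝ → X → ℝ) (φ' : X → ℝ) (θ₀ : ℝ)
    (hderiv : ∀ x, HasDerivAt (fun θ => φ θ x) (φ' x) θ₀)
    (hpos : ∀ x, 0 < φ θ₀ x) :
    HasDerivAt (fun θ =>
        -∑ x, p x * Real.log ((φ θ x / Z) / (φ θ x / Z + m * ξ x))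
        - m * ∑ x, ξ x * Real.log (m * ξ x / (φ θ x / Z + m * ξ x)))
      (-∑ x, (p x / (φ θ₀ x / Z) - 1) * (m * ξ x / (φ θ₀ x / Z + m * ξ x))
          * (1 / Z) * φ' x) θ₀ := by
  have hgrad := stmt_13_general p (fun x => (hξ x).le) hm.le
    (fun x => ((hderiv x).div_const Z).hasFDerivAt) (fun x => div_pos (hpos x) hZ)
  simpa [nceLoss, mul_assoc, div_eq_inv_mul (φ' _)] using hgrad.hasDerivAt
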